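/- Let Λ ⊗ Γ be a g-fusion frame for H ⊗ K with frame operator S_{Λ⊗Γ} = S_Λ ⊗ S_Γ. Then the g-fusion frame operator of the canonical dual g-fusion frame Θ = {(S_{Λ⊗Γ}^{-1}(V_i ⊗ W_j), (Λ_i ⊗ Γ_j) P_{V_i ⊗ W_j} S_{Λ⊗Γ}^{-1}, v_i w_j)} equals S_{Λ⊗Γ}^{-1}; that is, Σ_{i,j} v_i² w_j² P_{S^{-1}(V_i⊗W_j)} Δ_{ij}* Δ_{ij} P_{S^{-1}(V_i⊗W_j)} (f ⊗ g) = S_{Λ⊗Γ}^{-1}(f ⊗ g), where Δ_{ij} = (Λ_i ⊗ Γ_j) P_{V_i ⊗ W_j} S_{Λ⊗Γ}^{-1}. -/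

import Mathlib

noncomputable section

open Submodule ContinuousLinearMap

local notation "⟪" x ", " y "⟫" => @inner ℂ _ _ x y

/-- An abstract realization of the Hilbert-space tensor product of `H` and `K`:
a map `tmul : H → K → E` whose inner products multiply and whose elementary
tensors have dense span. -/
structure HilbertTensor (H K E : Type*) [NormedAddCommGroup H] [InnerProductSpace ℂ H]
    [NormedAddCommGroup K] [InnerProductSpace ℂ K]
    [NormedAddCommGroup E] [InnerProductSpace ℂ E] where
  tmul : H → K → E
  inner_tmul : ∀ (f f' : H) (g g' : K),
    ⟪tmul f g, tmul f' g'⟫ = ⟪f, f'⟫ * ⟪g, g'⟫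
  dense_span : Dense (Submodule.span ℂ (Set.range fun p : H × K => tmul p.1 p.2) : Set E)

variable {H K E H' K' E' : Type*}
variable [NormedAddCommGroup H] [InnerProductSpace ℂ H]
variable [NormedAddCommGroup K] [InnerProductSpace ℂ K]
variable [NormedAddCommGroup E] [InnerProductSpace ℂ E]
variable [NormedAddCommGroup H'] [InnerProductSpace ℂ H']
variable [NormedAddCommGroup K'] [InnerProductSpace ℂ K']
variable [NormedAddCommGroup E'] [InnerProductSpace ℂ E']

/-- The orthogonal projection onto a (closed) subspace, as an operator `H →L[ℂ] H`. -/
def projL (V : Submodule ℂ H) [HasOrthogonalProjection V] : H →L[ℂ] H :=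
  V.subtypeL.comp (orthogonalProjection V)

/-- `R` is the tensor product operator `Q ⊗ T`, i.e. it is determined on elementary
tensors by `(Q ⊗ T)(f ⊗ g) = Qf ⊗ Tg`. -/
def IsTensorOp (tp : HilbertTensor H K E) (tp' : HilbertTensor H' K' E')
    (Q : H →L[ℂ] H') (T : K →L[ℂ] K') (R : E →L[ℂ] E') : Prop :=
  ∀ (f : H) (g : K), R (tp.tmul f g) = tp'.tmul (Q f) (T g)

/-- The tensor product `V ⊗ W` of subspaces: the closure of the span of elementary
tensors of elements of `V` and `W`. -/
def tsub (tp : HilbertTensor H K E) (V : Submodule ℂ H) (W : Submodule ℂ K) : Submodule ℂ E :=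
  (Submodule.span ℂ {x : E | ∃ f ∈ V, ∃ g ∈ W, x = tp.tmul f g}).topologicalClosure

/-- `{(V i, Λ i, v i)}` is a g-fusion Bessel sequence in `H` with bound `B`. -/
def IsGFusionBessel {ι : Type*} {Hi : ι → Type*}
    [∀ i, NormedAddCommGroup (Hi i)] [∀ i, InnerProductSpace ℂ (Hi i)]
    (V : ι → Submodule ℂ H) [∀ i, HasOrthogonalProjection (V i)]
    (Λ : ∀ i, H →L[ℂ] Hi i) (v : ι → ℝ) (B : ℝ) : Prop :=
  (∀ i, 0 < v i) ∧ 0 < B ∧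
    ∀ f : H, ∑' i, (v i) ^ 2 * ‖Λ i (projL (V i) f)‖ ^ 2 ≤ B * ‖f‖ ^ 2

/-- `{(V i, Λ i, v i)}` is a g-fusion frame for `H` with bounds `A ≤ B`. -/
def IsGFusionFrame {ι : Type*} {Hi : ι → Type*}
    [∀ i, NormedAddCommGroup (Hi i)] [∀ i, InnerProductSpace ℂ (Hi i)]
    (V : ι → Submodule ℂ H) [∀ i, HasOrthogonalProjection (V i)]
    (Λ : ∀ i, H →L[ℂ] Hi i) (v : ι → ℝ) (A B : ℝ) : Prop :=
  (∀ i, 0 < v i) ∧ 0 < A ∧ A ≤ B ∧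
    ∀ f : H, A * ‖f‖ ^ 2 ≤ ∑' i, (v i) ^ 2 * ‖Λ i (projL (V i) f)‖ ^ 2 ∧
      ∑' i, (v i) ^ 2 * ‖Λ i (projL (V i) f)‖ ^ 2 ≤ B * ‖f‖ ^ 2

/-!
A g-fusion family is the family of operators `N p = c p • Δ p ∘ P_{U p}`, and its frame operator is
the strong sum of the `(N p)† (N p)`. If `∑ p, ⟪N p x, N p y⟫ = ⟪S x, y⟫` holds for `x, y` in a
total set, then it extends to the span, where it gives `∑ p, ‖N p x‖ ^ 2 ≤ ‖S‖ * ‖x‖ ^ 2`. By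
density this bound holds everywhere, so the family has an analysis operator `θ` into `ℓ²`, and
`S = θ† θ`. On elementary tensors the weak identity for `S_Λ ⊗ S_Γ` is the product of those for
`S_Λ` and `S_Γ`.

For the dual, `P_U S⁻¹ P_{S⁻¹ U} = P_U S⁻¹` because `S⁻¹` is self-adjoint. Hence the operators of
the dual family are `N p ∘ S⁻¹`, and their frame operator is `S⁻¹ S S⁻¹ = S⁻¹`.
-/

lemma hasSum_mul_prod {ι κ R : Type*} [NormedRing R] [NormedAlgebra ℝ R] [FiniteDimensional ℝ R]
    {a : ι → R} {b : κ → R} {x y : R} (ha : HasSum a x) (hb : HasSum b y) :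
    HasSum (fun p : ι × κ => a p.1 * b p.2) (x * y) :=
  have : CompleteSpace R := FiniteDimensional.complete ℝ R
  ha.mul hb (summable_mul_of_summable_norm ha.summable.norm hb.summable.norm)

lemma isSelfAdjoint_of_mul_eq_one {M : Type*} [Monoid M] [StarMul M] {a b : M}
    (ha : IsSelfAdjoint a) (hab : a * b = 1) : IsSelfAdjoint b := by
  have hba : star b * a = 1 := by rw [← ha.star_eq, ← star_mul, hab, star_one]
  exact left_inv_eq_right_inv hba hab

section GFrames

variable {𝕜 P X Z : Type*} [RCLike 𝕜] [NormedAddCommGroup X] [InnerProductSpace 𝕜 X]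
  [NormedAddCommGroup Z] [InnerProductSpace 𝕜 Z]
  {Y : P → Type*} [∀ p, NormedAddCommGroup (Y p)] [∀ p, InnerProductSpace 𝕜 (Y p)]
  {N : ∀ p, X →L[𝕜] Y p} {S : X →L[𝕜] X} {B : ℝ} {s : Set X}

/-- The family of operators `N` is g-Bessel with bound `B`. The inequality is required of the finite
partial sums, so that it contains the convergence of `∑ p, ‖N p x‖ ^ 2`. -/
def IsGBessel (N : ∀ p, X →L[𝕜] Y p) (B : ℝ) : Prop :=
  ∀ (s : Finset P) (x : X), ∑ p ∈ s, ‖N p x‖ ^ 2 ≤ B * ‖x‖ ^ 2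

namespace IsGBessel

lemma memℓp (hN : IsGBessel N B) (x : X) : Memℓp (fun p => N p x) 2 :=
  memℓp_gen' (C := B * ‖x‖ ^ 2) fun s => by simpa using hN s x

/-- The analysis operator `x ↦ (N p x)_p` of a g-Bessel family, with values in the `ℓ²`-sum of the
target spaces. -/
def analysisOperator (hN : IsGBessel N B) : X →L[𝕜] lp Y 2 :=
  LinearMap.mkContinuous
    { toFun := fun x => ⟨fun p => N p x, hN.memℓp x⟩
      map_add' := fun x y => by ext p; exact map_add (N p) x y
      map_smul' := fun c x => by ext p; exact map_smul (N p) c x }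
    √B fun x => by
      refine lp.norm_le_of_forall_sum_le (by simp) (by positivity) fun s => ?_
      have le_sq_sqrt : B ≤ √B ^ 2 := (le_max_left B 0).trans_eq Real.sq_sqrt'.symm
      simpa [mul_pow] using (hN s x).trans (by gcongr)

lemma analysisOperator_apply (hN : IsGBessel N B) (x : X) (p : P) :
    hN.analysisOperator x p = N p x := rfl

lemma adjoint_analysisOperator_single [CompleteSpace X] [∀ p, CompleteSpace (Y p)] [DecidableEq P]
    (hN : IsGBessel N B) (p : P) (u : Y p) :
    adjoint hN.analysisOperator (lp.single 2 p u) = adjoint (N p) u := by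
  refine ext_inner_right 𝕜 fun y => ?_
  rw [adjoint_inner_left, adjoint_inner_left, lp.inner_single_left, analysisOperator_apply]

end IsGBessel

lemma hasSum_inner_of_mem_span
    (h : ∀ x ∈ s, ∀ y ∈ s, HasSum (fun p => inner 𝕜 (N p x) (N p y)) (inner 𝕜 (S x) y))
    {x y : X} (hx : x ∈ span 𝕜 s) (hy : y ∈ span 𝕜 s) :
    HasSum (fun p => inner 𝕜 (N p x) (N p y)) (inner 𝕜 (S x) y) := by
  induction hx, hy using span_induction₂ with
  | mem_mem x y hxs hys => exact h x hxs y hys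
  | zero_left y _ => simp
  | zero_right x _ => simp
  | add_left x y z _ _ _ hxz hyz => simpa only [map_add, inner_add_left] using hxz.add hyz
  | add_right x y z _ _ _ hxy hxz => simpa only [map_add, inner_add_right] using hxy.add hxz
  | smul_left c x y _ _ hxy =>
    simpa only [map_smul, inner_smul_left] using hxy.mul_left (starRingEnd 𝕜 c)
  | smul_right c x y _ _ hxy => simpa only [map_smul, inner_smul_right] using hxy.mul_left c

lemma isGBessel_of_dense_span (hs : Dense (span 𝕜 s : Set X))
    (h : ∀ x ∈ s, ∀ y ∈ s, HasSum (fun p => inner 𝕜 (N p x) (N p y)) (inner 𝕜 (S x) y)) :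
    IsGBessel N ‖S‖ := by
  intro t x
  have hclosed : IsClosed {x : X | ∑ p ∈ t, ‖N p x‖ ^ 2 ≤ ‖S‖ * ‖x‖ ^ 2} :=
    isClosed_le (by fun_prop) (by fun_prop)
  refine hclosed.closure_subset_iff.2 (fun x hx => ?_) (hs x)
  have hsum : HasSum (fun p => ‖N p x‖ ^ 2) (RCLike.re (inner 𝕜 (S x) x)) := by
    simpa only [RCLike.reCLM_apply, inner_self_eq_norm_sq] using
      (RCLike.reCLM (K := 𝕜)).hasSum (hasSum_inner_of_mem_span h hx hx)
  calc ∑ p ∈ t, ‖N p x‖ ^ 2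
      ≤ RCLike.re (inner 𝕜 (S x) x) := sum_le_hasSum t (fun p _ => by positivity) hsum
    _ ≤ ‖S x‖ * ‖x‖ := re_inner_le_norm _ _
    _ ≤ ‖S‖ * ‖x‖ * ‖x‖ := by gcongr; exact S.le_opNorm x
    _ = ‖S‖ * ‖x‖ ^ 2 := by ring

variable [CompleteSpace X] [CompleteSpace Z] [∀ p, CompleteSpace (Y p)]

/-- `S` is the frame operator `∑ p, (N p)† (N p)` of the family of operators `N`, the sum converging
unconditionally in the strong operator topology. -/
def HasFrameOperator (N : ∀ p, X →L[𝕜] Y p) (S : X →L[𝕜] X) : Prop :=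
  ∀ x, HasSum (fun p => adjoint (N p) (N p x)) (S x)

lemma IsGBessel.hasFrameOperator (hN : IsGBessel N B) :
    HasFrameOperator N (adjoint hN.analysisOperator ∘L hN.analysisOperator) := by
  classical
  intro x
  have hsum := (adjoint hN.analysisOperator).hasSum
    (lp.hasSum_single ENNReal.ofNat_ne_top (hN.analysisOperator x))
  simpa only [hN.adjoint_analysisOperator_single, hN.analysisOperator_apply, comp_apply] using hsum

namespace HasFrameOperator

lemma hasSum_inner (h : HasFrameOperator N S) (x y : X) :
    HasSum (fun p => inner 𝕜 (N p x) (N p y)) (inner 𝕜 (S x) y) := by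
  have hsum := ((innerSL 𝕜 y).hasSum (h x)).star
  simpa only [innerSL_apply_apply, RCLike.star_def, inner_conj_symm, adjoint_inner_left]
    using hsum

lemma isSelfAdjoint (h : HasFrameOperator N S) : IsSelfAdjoint S := by
  refine ContinuousLinearMap.isSelfAdjoint_iff_isSymmetric.2 fun x y => ?_
  have hsum := (h.hasSum_inner y x).star
  simp only [RCLike.star_def, inner_conj_symm] at hsum
  exact (h.hasSum_inner x y).unique hsum

lemma comp (h : HasFrameOperator N S) (T : Z →L[𝕜] X) :
    HasFrameOperator (fun p => N p ∘L T) (adjoint T ∘L S ∘L T) := fun z => by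
  simpa only [adjoint_comp, comp_apply] using (adjoint T).hasSum (h (T z))

end HasFrameOperator

lemma HasFrameOperator.comp_rightInverse (h : HasFrameOperator N S) {T : X →L[𝕜] X}
    (hST : S ∘L T = ContinuousLinearMap.id 𝕜 X) : HasFrameOperator (fun p => N p ∘L T) T := by
  have hT : adjoint T = T := isSelfAdjoint_of_mul_eq_one h.isSelfAdjoint hST
  simpa only [hT, hST, comp_id] using h.comp T

theorem hasFrameOperator_of_dense_span (hs : Dense (span 𝕜 s : Set X))
    (h : ∀ x ∈ s, ∀ y ∈ s, HasSum (fun p => inner 𝕜 (N p x) (N p y)) (inner 𝕜 (S x) y)) :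
    HasFrameOperator N S := by
  have hN := (isGBessel_of_dense_span hs h).hasFrameOperator
  convert hN
  refine ContinuousLinearMap.ext_on hs fun x hx => hs.eq_of_inner_left 𝕜 fun y hy => ?_
  exact (hasSum_inner_of_mem_span h (subset_span hx) hy).unique (hN.hasSum_inner x y)

lemma starProjection_comp_adjoint_comp_starProjection_map (T : X →L[𝕜] Z) (U : Submodule 𝕜 X)
    [HasOrthogonalProjection U] [HasOrthogonalProjection (U.map T.toLinearMap)] :
    U.starProjection ∘L adjoint T ∘L (U.map T.toLinearMap).starProjection =
      U.starProjection ∘L adjoint T := by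
  ext z
  refine ext_inner_right 𝕜 fun x => ?_
  have hmem : T (U.starProjection x) ∈ U.map T.toLinearMap :=
    mem_map_of_mem (U.starProjection_apply_mem x)
  simp only [comp_apply, inner_starProjection_left_eq_right, adjoint_inner_left,
    starProjection_eq_self_iff.2 hmem]

end GFrames

section GFusion

variable {P : Type*} {Y : P → Type*} [∀ p, NormedAddCommGroup (Y p)]
  [∀ p, InnerProductSpace ℂ (Y p)]
  {U : P → Submodule ℂ E} [∀ p, HasOrthogonalProjection (U p)]
  {Δ : ∀ p, E →L[ℂ] Y p} {c : P → ℝ} {S : E →L[ℂ] E}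

lemma projL_eq_starProjection (V : Submodule ℂ H) [HasOrthogonalProjection V] :
    projL V = V.starProjection := rfl

/-- The operators `c p • Δ p ∘ P_{U p}`, which reduce the g-fusion family `{(U p, Δ p, c p)}` to a
family without subspaces and weights. -/
def gFusionFamily (U : P → Submodule ℂ E) [∀ p, HasOrthogonalProjection (U p)]
    (Δ : ∀ p, E →L[ℂ] Y p) (c : P → ℝ) (p : P) : E →L[ℂ] Y p :=
  (c p : ℂ) • (Δ p ∘L projL (U p))

lemma IsGFusionFrame.isGBessel {A B : ℝ} (h : IsGFusionFrame U Δ c A B) :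
    IsGBessel (gFusionFamily U Δ c) B := by
  obtain ⟨-, hA, -, hbounds⟩ := h
  intro s x
  have hnorm (p : P) : ‖gFusionFamily U Δ c p x‖ ^ 2 = c p ^ 2 * ‖Δ p (projL (U p) x)‖ ^ 2 := by
    simp [gFusionFamily, norm_smul, mul_pow]
  simp only [hnorm]
  rcases eq_or_ne x 0 with rfl | hx
  · simp
  -- A divergent `tsum` is `0`, which the lower frame bound excludes.
  have hsummable : Summable fun p => c p ^ 2 * ‖Δ p (projL (U p) x)‖ ^ 2 := by
    by_contra hdiv
    have hlower := (hbounds x).1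
    rw [tsum_eq_zero_of_not_summable hdiv] at hlower
    exact hlower.not_gt (by positivity)
  exact (hsummable.sum_le_tsum s fun p _ => by positivity).trans (hbounds x).2

variable [CompleteSpace E] [∀ p, CompleteSpace (Y p)]

/-- `S` is the frame operator of the g-fusion family `{(U p, Δ p, c p)}`, with unconditional
convergence of the defining series at every vector. -/
def HasGFusionFrameOperator (U : P → Submodule ℂ E) [∀ p, HasOrthogonalProjection (U p)]
    (Δ : ∀ p, E →L[ℂ] Y p) (c : P → ℝ) (S : E →L[ℂ] E) : Prop :=
  ∀ x, HasSum (fun p => (c p ^ 2 : ℝ) • projL (U p) (adjoint (Δ p) (Δ p (projL (U p) x)))) (S x)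

lemma adjoint_gFusionFamily_apply (p : P) (x : E) :
    adjoint (gFusionFamily U Δ c p) (gFusionFamily U Δ c p x) =
      (c p ^ 2 : ℝ) • projL (U p) (adjoint (Δ p) (Δ p (projL (U p) x))) := by
  have hproj : adjoint (projL (U p)) = projL (U p) := isSelfAdjoint_starProjection (U p)
  simp only [gFusionFamily, map_smulₛₗ, RingHom.id_apply, adjoint_comp, hproj, smul_apply,
    comp_apply, Complex.conj_ofReal, smul_smul, ← Complex.coe_smul, Complex.ofReal_mul, sq]

lemma hasGFusionFrameOperator_iff :
    HasGFusionFrameOperator U Δ c S ↔ HasFrameOperator (gFusionFamily U Δ c) S := by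
  simp only [HasGFusionFrameOperator, HasFrameOperator, adjoint_gFusionFamily_apply]

lemma IsGFusionFrame.hasGFusionFrameOperator {A B : ℝ} (h : IsGFusionFrame U Δ c A B)
    (hS : ∀ x, S x =
      ∑' p, (c p ^ 2 : ℝ) • projL (U p) (adjoint (Δ p) (Δ p (projL (U p) x)))) :
    HasGFusionFrameOperator U Δ c S := fun x => by
  rw [hS x]
  exact (hasGFusionFrameOperator_iff.2 h.isGBessel.hasFrameOperator x).summable.hasSum

theorem HasGFusionFrameOperator.canonicalDual (h : HasGFusionFrameOperator U Δ c S)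
    {T : E →L[ℂ] E} (hST : S ∘L T = ContinuousLinearMap.id ℂ E)
    [∀ p, HasOrthogonalProjection ((U p).map T.toLinearMap)] :
    HasGFusionFrameOperator (fun p => (U p).map T.toLinearMap)
      (fun p => Δ p ∘L projL (U p) ∘L T) c T := by
  rw [hasGFusionFrameOperator_iff] at h ⊢
  have hT : adjoint T = T := isSelfAdjoint_of_mul_eq_one h.isSelfAdjoint hST
  have hproj (p : P) :
      projL (U p) ∘L T ∘L projL ((U p).map T.toLinearMap) = projL (U p) ∘L T := by
    simpa only [hT, projL_eq_starProjection] using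
      starProjection_comp_adjoint_comp_starProjection_map T (U p)
  have hfamily : gFusionFamily (fun p => (U p).map T.toLinearMap)
      (fun p => Δ p ∘L projL (U p) ∘L T) c = fun p => gFusionFamily U Δ c p ∘L T := by
    ext1 p
    simp only [gFusionFamily, smul_comp, comp_assoc, hproj]
  rw [hfamily]
  exact h.comp_rightInverse hST

end GFusion

section Tensor

lemma HilbertTensor.ext_inner (tp : HilbertTensor H K E) {x y : E}
    (h : ∀ f g, ⟪x, tp.tmul f g⟫ = ⟪y, tp.tmul f g⟫) : x = y := by
  have heq : innerSL ℂ x = innerSL ℂ y :=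
    ContinuousLinearMap.ext_on tp.dense_span (by rintro _ ⟨⟨f, g⟩, rfl⟩; exact h f g)
  exact ext_inner_right ℂ fun z => DFunLike.congr_fun heq z

lemma HilbertTensor.tmul_smul_smul (tp : HilbertTensor H K E) (a b : ℂ) (f : H) (g : K) :
    tp.tmul (a • f) (b • g) = (a * b) • tp.tmul f g := by
  refine tp.ext_inner fun f' g' => ?_
  simp only [tp.inner_tmul, inner_smul_left, map_mul]
  ring

namespace IsTensorOp

variable {tp : HilbertTensor H K E} {tp' : HilbertTensor H' K' E'}
  {Q : H →L[ℂ] H'} {T : K →L[ℂ] K'} {R : E →L[ℂ] E'}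

lemma smul (h : IsTensorOp tp tp' Q T R) (a b : ℂ) :
    IsTensorOp tp tp' (a • Q) (b • T) ((a * b) • R) := fun f g => by
  simp only [smul_apply, h f g, tp'.tmul_smul_smul]

lemma comp {H₀ K₀ E₀ : Type*} [NormedAddCommGroup H₀] [InnerProductSpace ℂ H₀]
    [NormedAddCommGroup K₀] [InnerProductSpace ℂ K₀] [NormedAddCommGroup E₀]
    [InnerProductSpace ℂ E₀] {tp₀ : HilbertTensor H₀ K₀ E₀} {Q₀ : H₀ →L[ℂ] H}
    {T₀ : K₀ →L[ℂ] K} {R₀ : E₀ →L[ℂ] E} (h : IsTensorOp tp tp' Q T R)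
    (h₀ : IsTensorOp tp₀ tp Q₀ T₀ R₀) :
    IsTensorOp tp₀ tp' (Q ∘L Q₀) (T ∘L T₀) (R ∘L R₀) := fun f g => by
  simp only [comp_apply, h₀ f g, h _ _]

lemma inner_apply_tmul (h : IsTensorOp tp tp' Q T R) (f f' : H) (g g' : K) :
    ⟪R (tp.tmul f g), R (tp.tmul f' g')⟫ = ⟪Q f, Q f'⟫ * ⟪T g, T g'⟫ := by
  rw [h, h, tp'.inner_tmul]

end IsTensorOp

lemma isTensorOp_projL (tp : HilbertTensor H K E) (V : Submodule ℂ H) (W : Submodule ℂ K)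
    [HasOrthogonalProjection V] [HasOrthogonalProjection W]
    [HasOrthogonalProjection (tsub tp V W)] :
    IsTensorOp tp tp (projL V) (projL W) (projL (tsub tp V W)) := by
  intro f g
  set z := tp.tmul (projL V f) (projL W g) with hz
  have hz_mem : z ∈ tsub tp V W := le_topologicalClosure _ <| subset_span
    ⟨_, V.starProjection_apply_mem f, _, W.starProjection_apply_mem g, rfl⟩
  have horth : tsub tp V W ≤ (ℂ ∙ (tp.tmul f g - z))ᗮ := by
    refine topologicalClosure_minimal _ (span_le.2 ?_) (isClosed_orthogonal _)
    rintro _ ⟨a, ha, b, hb, rfl⟩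
    have hfa : ⟪projL V f, a⟫ = ⟪f, a⟫ := by
      rw [projL_eq_starProjection, inner_starProjection_left_eq_right,
        starProjection_eq_self_iff.2 ha]
    have hgb : ⟪projL W g, b⟫ = ⟪g, b⟫ := by
      rw [projL_eq_starProjection, inner_starProjection_left_eq_right,
        starProjection_eq_self_iff.2 hb]
    rw [SetLike.mem_coe, mem_orthogonal_singleton_iff_inner_right, inner_sub_left, hz,
      tp.inner_tmul, tp.inner_tmul, hfa, hgb, sub_self]
  exact eq_starProjection_of_mem_of_inner_eq_zero hz_mem fun y hy =>
    mem_orthogonal_singleton_iff_inner_right.1 (horth hy)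

variable {ι κ : Type*} [CompleteSpace H] [CompleteSpace K] [CompleteSpace E]
  {Hi : ι → Type*} [∀ i, NormedAddCommGroup (Hi i)] [∀ i, InnerProductSpace ℂ (Hi i)]
  [∀ i, CompleteSpace (Hi i)]
  {Kj : κ → Type*} [∀ j, NormedAddCommGroup (Kj j)] [∀ j, InnerProductSpace ℂ (Kj j)]
  [∀ j, CompleteSpace (Kj j)]
  {tp : HilbertTensor H K E} {SΛ : H →L[ℂ] H} {SΓ : K →L[ℂ] K} {S : E →L[ℂ] E}

theorem HasFrameOperator.tensor {Ep : ι × κ → Type*} [∀ p, NormedAddCommGroup (Ep p)]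
    [∀ p, InnerProductSpace ℂ (Ep p)] [∀ p, CompleteSpace (Ep p)]
    {tpp : ∀ p : ι × κ, HilbertTensor (Hi p.1) (Kj p.2) (Ep p)}
    {L : ∀ i, H →L[ℂ] Hi i} {M : ∀ j, K →L[ℂ] Kj j} {N : ∀ p, E →L[ℂ] Ep p}
    (hL : HasFrameOperator L SΛ) (hM : HasFrameOperator M SΓ)
    (hN : ∀ p, IsTensorOp tp (tpp p) (L p.1) (M p.2) (N p))
    (hS : IsTensorOp tp tp SΛ SΓ S) : HasFrameOperator N S := by
  refine hasFrameOperator_of_dense_span tp.dense_span ?_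
  rintro _ ⟨⟨f, g⟩, rfl⟩ _ ⟨⟨f', g'⟩, rfl⟩
  have hf := hL.hasSum_inner f f'
  have hg := hM.hasSum_inner g g'
  have hinner (p : ι × κ) : ⟪N p (tp.tmul f g), N p (tp.tmul f' g')⟫ =
      ⟪L p.1 f, L p.1 f'⟫ * ⟪M p.2 g, M p.2 g'⟫ := (hN p).inner_apply_tmul f f' g g'
  rw [hS f g, tp.inner_tmul]
  exact (hasSum_mul_prod hf hg).congr_fun hinner

variable {Eij : ι → κ → Type*} [∀ i j, NormedAddCommGroup (Eij i j)]
  [∀ i j, InnerProductSpace ℂ (Eij i j)] [∀ i j, CompleteSpace (Eij i j)]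
  {tpij : ∀ i j, HilbertTensor (Hi i) (Kj j) (Eij i j)}
  {V : ι → Submodule ℂ H} [∀ i, HasOrthogonalProjection (V i)]
  {W : κ → Submodule ℂ K} [∀ j, HasOrthogonalProjection (W j)]
  [∀ i j, HasOrthogonalProjection (tsub tp (V i) (W j))]
  {Λ : ∀ i, H →L[ℂ] Hi i} {Γ : ∀ j, K →L[ℂ] Kj j} {v : ι → ℝ} {w : κ → ℝ}
  {Rij : ∀ i j, E →L[ℂ] Eij i j}

theorem HasGFusionFrameOperator.tensor (hΛ : HasGFusionFrameOperator V Λ v SΛ)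
    (hΓ : HasGFusionFrameOperator W Γ w SΓ)
    (hRij : ∀ i j, IsTensorOp tp (tpij i j) (Λ i) (Γ j) (Rij i j))
    (hS : IsTensorOp tp tp SΛ SΓ S) :
    HasGFusionFrameOperator (fun p : ι × κ => tsub tp (V p.1) (W p.2))
      (fun p => Rij p.1 p.2) (fun p => v p.1 * w p.2) S := by
  rw [hasGFusionFrameOperator_iff] at hΛ hΓ ⊢
  refine hΛ.tensor (tpp := fun p => tpij p.1 p.2) hΓ (fun p => ?_) hS
  simpa only [gFusionFamily, Complex.ofReal_mul] using
    ((hRij p.1 p.2).comp (isTensorOp_projL tp (V p.1) (W p.2))).smul (v p.1) (w p.2)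

theorem stmt_15_general (hΛ : HasGFusionFrameOperator V Λ v SΛ)
    (hΓ : HasGFusionFrameOperator W Γ w SΓ)
    (hRij : ∀ i j, IsTensorOp tp (tpij i j) (Λ i) (Γ j) (Rij i j))
    (hS : IsTensorOp tp tp SΛ SΓ S) {Si : E →L[ℂ] E}
    (hS1 : S ∘L Si = ContinuousLinearMap.id ℂ E)
    [∀ i j, HasOrthogonalProjection ((tsub tp (V i) (W j)).map Si.toLinearMap)] :
    HasGFusionFrameOperator (fun p : ι × κ => (tsub tp (V p.1) (W p.2)).map Si.toLinearMap)
      (fun p => Rij p.1 p.2 ∘L projL (tsub tp (V p.1) (W p.2)) ∘L Si)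
      (fun p => v p.1 * w p.2) Si :=
  (hΛ.tensor hΓ hRij hS).canonicalDual hS1

end Tensor

/-- the g-fusion frame operator of the canonical dual g-fusion frame
`Θ` of `Λ ⊗ Γ` is `S_{Λ⊗Γ}⁻¹`. -/
theorem stmt_15 {ι κ : Type*} [CompleteSpace H] [CompleteSpace K] [CompleteSpace E]
    {Hi : ι → Type*} [∀ i, NormedAddCommGroup (Hi i)] [∀ i, InnerProductSpace ℂ (Hi i)]
    [∀ i, CompleteSpace (Hi i)]
    {Kj : κ → Type*} [∀ j, NormedAddCommGroup (Kj j)] [∀ j, InnerProductSpace ℂ (Kj j)]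
    [∀ j, CompleteSpace (Kj j)]
    {Eij : ι → κ → Type*} [∀ i j, NormedAddCommGroup (Eij i j)]
    [∀ i j, InnerProductSpace ℂ (Eij i j)] [∀ i j, CompleteSpace (Eij i j)]
    (tp : HilbertTensor H K E) (tpij : ∀ i j, HilbertTensor (Hi i) (Kj j) (Eij i j))
    (V : ι → Submodule ℂ H) [∀ i, HasOrthogonalProjection (V i)]
    (W : κ → Submodule ℂ K) [∀ j, HasOrthogonalProjection (W j)]
    [∀ i j, HasOrthogonalProjection (tsub tp (V i) (W j))]
    (Λ : ∀ i, H →L[ℂ] Hi i) (Γ : ∀ j, K →L[ℂ] Kj j)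
    (v : ι → ℝ) (w : κ → ℝ) (A B C D : ℝ)
    (hΛ : IsGFusionFrame V Λ v A B) (hΓ : IsGFusionFrame W Γ w C D)
    (Rij : ∀ i j, E →L[ℂ] Eij i j)
    (hRij : ∀ i j, IsTensorOp tp (tpij i j) (Λ i) (Γ j) (Rij i j))
    (SΛ : H →L[ℂ] H) (SΓ : K →L[ℂ] K)
    (hSΛ : ∀ f : H, SΛ f = ∑' i, ((v i) ^ 2 : ℝ) •
      projL (V i) (ContinuousLinearMap.adjoint (Λ i) (Λ i (projL (V i) f))))
    (hSΓ : ∀ g : K, SΓ g = ∑' j, ((w j) ^ 2 : ℝ) •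
      projL (W j) (ContinuousLinearMap.adjoint (Γ j) (Γ j (projL (W j) g))))
    (S Si : E →L[ℂ] E)
    (hS : IsTensorOp tp tp SΛ SΓ S)
    (hS1 : S.comp Si = ContinuousLinearMap.id ℂ E)
    (hS2 : Si.comp S = ContinuousLinearMap.id ℂ E)
    [∀ i j, HasOrthogonalProjection ((tsub tp (V i) (W j)).map Si.toLinearMap)] :
    ∀ (f : H) (g : K),
      (∑' p : ι × κ, ((v p.1 * w p.2) ^ 2 : ℝ) •
        projL ((tsub tp (V p.1) (W p.2)).map Si.toLinearMap)
          (ContinuousLinearMap.adjoint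
              ((Rij p.1 p.2).comp ((projL (tsub tp (V p.1) (W p.2))).comp Si))
            (((Rij p.1 p.2).comp ((projL (tsub tp (V p.1) (W p.2))).comp Si))
              (projL ((tsub tp (V p.1) (W p.2)).map Si.toLinearMap) (tp.tmul f g))))) =
      Si (tp.tmul f g) :=
  fun f g => (stmt_15_general (hΛ.hasGFusionFrameOperator hSΛ) (hΓ.hasGFusionFrameOperator hSΓ)
    hRij hS hS1 (tp.tmul f g)).tsum_eq
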